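/- Let 𝕏 = {p_1,…,p_s} ⊆ ℙ^n_K be a set of s distinct K-rational points with r_𝕏 ≥ 2, none lying on Z(X_0), and for j = 1,…,s let f_j ∈ R_{r_𝕏} be the separator of 𝕏∖{p_j} in 𝕏 with f_j(p_j) = 1 and f_j(p_k) = 0 for k ≠ j. Then 𝕏 is a Cayley–Bacharach scheme if and only if x_0^{r_𝕏−2}·f_j ∉ (δ_𝕏)_{2r_𝕏−2} for all j = 1,…,s. -/

import Mathlib

noncomputable section

/-! An algebraic model for a 0-dimensional subscheme `𝕏 ⊆ ℙⁿ_K` whose support avoids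
the hyperplane `Z(X₀)`.  The scheme is recorded through the local rings
`𝒪_{𝕏,p_j}` at the points `p_1, …, p_s` of its support, together with the germ map
sending a homogeneous polynomial `F` of degree `i` to the tuple of germs
`(F_{p_1}, …, F_{p_s})`; this is the degree-`i` component of the injection
`ĩ : R → Q^h(R) ≅ ∏_j 𝒪_{𝕏,p_j}[T_j, T_j⁻¹]`, where every graded component of
`Q^h(R)` is identified with `Γ = ∏_j 𝒪_{𝕏,p_j}` by dropping the powers of the `T_j`.
Since `x₀` has germ `1` at every point, the homogeneous coordinate ring
`R = P/I_𝕏` is faithfully encoded by the chain of subspaces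
`R_i ≅ V_i = germ(P_i) ⊆ Γ` (with `V_i ⊆ V_{i+1}`, and `V_i = Γ` for `i ≫ 0`). -/

/-- The data of one (fat) point of a 0-dimensional scheme: a finite local `K`-algebra. -/
structure PointData (K : Type) [Field K] : Type 1 where
  carrier : Type
  [ring : CommRing carrier]
  [alg : Algebra K carrier]
  [loc : IsLocalRing carrier]
  [findim : FiniteDimensional K carrier]

attribute [instance] PointData.ring PointData.alg PointData.loc PointData.findim

/-- A model of a 0-dimensional subscheme of `ℙⁿ_K`, no point of whose support lies
on `Z(X₀)` (coordinates being chosen so that each point has `X₀`-coordinate 1, the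
germ of `x₀` at every point is `1`). -/
structure ZeroDimScheme (K : Type) [Field K] (n : ℕ) : Type 1 where
  /-- the number of points in the support -/
  s : ℕ
  spos : 0 < s
  /-- the local rings `𝒪_{𝕏,p_j}` -/
  pt : Fin s → PointData K
  /-- the germ map: for `F` homogeneous of degree `i` this is the degree-`i`
  component of `ĩ : R → Q^h(R)`, i.e. `F ↦ (F_{p_1}, …, F_{p_s})` -/
  germ : MvPolynomial (Fin (n + 1)) K →ₐ[K] ∀ j, (pt j).carrier
  /-- the germ of `X₀` at each point is `1` -/
  germ_X0 : germ (MvPolynomial.X 0) = 1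
  /-- in all large degrees, the germ map is surjective onto `∏_j 𝒪_{𝕏,p_j}`
  (this characterizes `I_𝕏` as the full homogeneous vanishing ideal of the scheme) -/
  eventually_surj : ∃ N : ℕ, ∀ i, N ≤ i →
    Submodule.map germ.toLinearMap
      (MvPolynomial.homogeneousSubmodule (Fin (n + 1)) K i) = ⊤

namespace ZeroDimScheme

variable {K : Type} [Field K] {n : ℕ}

/-- `Γ = ∏_j 𝒪_{𝕏,p_j}`, the common model for every graded component of `Q^h(R)`. -/
abbrev Gamma (S : ZeroDimScheme K n) : Type := ∀ j, (S.pt j).carrier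

variable (S : ZeroDimScheme K n)

/-- `V i ⊆ Γ` is the image of the degree-`i` component `R_i` of the homogeneous
coordinate ring `R` under (the degree-`i` component of) `ĩ`; we identify `R_i ≅ V i`. -/
def V (i : ℕ) : Submodule K S.Gamma :=
  Submodule.map S.germ.toLinearMap
    (MvPolynomial.homogeneousSubmodule (Fin (n + 1)) K i)

/-- `R_i` for `i : ℤ` (zero in negative degrees). -/
def Vz (i : ℤ) : Submodule K S.Gamma := if 0 ≤ i then S.V i.toNat else ⊥

/-- `deg 𝕏 = Σ_j dim_K 𝒪_{𝕏,p_j}`. -/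
def degX : ℕ := Module.finrank K S.Gamma

/-- The Hilbert function `HF_𝕏(i) = dim_K R_i`. -/
def HF (i : ℕ) : ℕ := Module.finrank K (S.V i)

/-- The Hilbert function on `ℤ`. -/
def HFz (i : ℤ) : ℕ := Module.finrank K (S.Vz i)

/-- The regularity index `r_𝕏`: the least `r` with `HF_𝕏(i) = deg 𝕏` for all `i ≥ r`. -/
def rX : ℕ := sInf {r : ℕ | ∀ i, r ≤ i → S.HF i = S.degX}

/-- `κ_j = dim_K κ(p_j)`, the residue field of `𝕏` at `p_j`. -/
def kappa (j : Fin S.s) : ℕ :=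
  Module.finrank K
    ((S.pt j).carrier ⧸
      Submodule.restrictScalars K (IsLocalRing.maximalIdeal (S.pt j).carrier))

/-- `sj` is a socle element of `𝒪_{𝕏,p_j}`, i.e. `sj ∈ Ann(𝔪_{𝕏,p_j})`.  By
Proposition 1.2, the maximal `p_j`-subschemes `𝕐 ⊆ 𝕏` correspond 1-1 to the ideals
of `Γ` generated by `(0,…,0,sj,0,…,0)` with `sj` a *nonzero* socle element. -/
def IsSocle (j : Fin S.s) (sj : (S.pt j).carrier) : Prop :=
  ∀ b ∈ IsLocalRing.maximalIdeal (S.pt j).carrier, sj * b = 0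

/-- The ideal `U = ⟨(0,…,0,sj,0,…,0)⟩` of `Γ` corresponding to the maximal
`p_j`-subscheme `𝕐` determined by the socle element `sj`; one has `I_{𝕐/𝕏} = ĩ⁻¹(U)`. -/
def sepIdeal (j : Fin S.s) (sj : (S.pt j).carrier) : Submodule K S.Gamma :=
  Submodule.restrictScalars K (Ideal.span {(Pi.single j sj : S.Gamma)})

/-- The degree-`i` component `(I_{𝕐/𝕏})_i = R_i ∩ ĩ⁻¹(U)` of the ideal of the maximal
`p_j`-subscheme `𝕐` (given by the socle element `sj`) in `R`. -/
def IY (j : Fin S.s) (sj : (S.pt j).carrier) (i : ℕ) : Submodule K S.Gamma :=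
  S.V i ⊓ S.sepIdeal j sj

/-- `(I_{𝕐/𝕏})_i` for `i : ℤ`. -/
def IYz (j : Fin S.s) (sj : (S.pt j).carrier) (i : ℤ) : Submodule K S.Gamma :=
  S.Vz i ⊓ S.sepIdeal j sj

/-- The Hilbert function `HF_𝕐(i) = HF_𝕏(i) - dim_K (I_{𝕐/𝕏})_i` of the maximal
`p_j`-subscheme `𝕐` given by the socle element `sj`. -/
def HFY (j : Fin S.s) (sj : (S.pt j).carrier) (i : ℕ) : ℕ :=
  S.HF i - Module.finrank K (S.IY j sj i)

/-- `HF_𝕐` on `ℤ`. -/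
def HFYz (j : Fin S.s) (sj : (S.pt j).carrier) (i : ℤ) : ℕ :=
  S.HFz i - Module.finrank K (S.IYz j sj i)

/-- `α_{𝕐/𝕏} = min {i | (I_{𝕐/𝕏})_i ≠ 0}`. -/
def alphaY (j : Fin S.s) (sj : (S.pt j).carrier) : ℕ :=
  sInf {i : ℕ | S.IY j sj i ≠ ⊥}

/-- `μ(a) = min {i | (0,…,0,a T_j^i,0,…,0) ∈ ĩ(R)}` for `a ∈ 𝒪_{𝕏,p_j}`. -/
def mu (j : Fin S.s) (a : (S.pt j).carrier) : ℕ :=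
  sInf {i : ℕ | (Pi.single j a : S.Gamma) ∈ S.V i}

/-- `μ_{𝕐/𝕏}`, the maximal degree of a minimal separator of the maximal
`p_j`-subscheme `𝕐` given by the socle element `sj`; independently of all choices it
equals `max {μ(a·sj) | a ∈ 𝒪_{𝕏,p_j}, a·sj ≠ 0}`. -/
def muY (j : Fin S.s) (sj : (S.pt j).carrier) : ℕ :=
  sSup {m : ℕ | ∃ a : (S.pt j).carrier, a * sj ≠ 0 ∧ m = S.mu j (a * sj)}

/-- `deg_𝕏(p_j) = min {μ_{𝕐/𝕏} | 𝕐 a maximal p_j-subscheme of 𝕏}`. -/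
def degP (j : Fin S.s) : ℕ :=
  sInf {m : ℕ | ∃ sj : (S.pt j).carrier, S.IsSocle j sj ∧ sj ≠ 0 ∧ m = S.muY j sj}

/-- `𝕏` has the Cayley–Bacharach property of degree `d`: `deg_𝕏(p_j) ≥ d + 1` for all `j`. -/
def CBP (d : ℕ) : Prop := ∀ j : Fin S.s, d + 1 ≤ S.degP j

/-- `𝕏` is a Cayley–Bacharach scheme: it has `CBP(r_𝕏 - 1)`. -/
def CayleyBacharach : Prop := S.CBP (S.rX - 1)

/-- The residue class map `𝒪_{𝕏,p_j} → κ(p_j)` as a `K`-linear map. -/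
def resQ (j : Fin S.s) :
    (S.pt j).carrier →ₗ[K]
      ((S.pt j).carrier ⧸
        Submodule.restrictScalars K (IsLocalRing.maximalIdeal (S.pt j).carrier)) :=
  (Submodule.restrictScalars K (IsLocalRing.maximalIdeal (S.pt j).carrier)).mkQ

/-- The residue classes of `e 0, …, e (κ_j - 1)` form a `K`-basis of `κ(p_j)`. -/
def IsResidueBasis (j : Fin S.s) {m : ℕ} (e : Fin m → (S.pt j).carrier) : Prop :=
  LinearIndependent K (fun k => S.resQ j (e k)) ∧
    Submodule.span K (Set.range fun k => S.resQ j (e k)) = ⊤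

/-- A family `τ_j : 𝒪_{𝕏,p_j} → K` of trace maps: each `τ_j` is a generator of
`Hom_K(𝒪_{𝕏,p_j}, K)` as an `𝒪_{𝕏,p_j}`-module.  Such a family exists iff `𝕏` is
locally Gorenstein, and it induces a homogeneous trace map `σ` of degree zero of
`Q^h(R)/L₀` (componentwise). -/
def IsTraceFamily (τ : ∀ j, (S.pt j).carrier →ₗ[K] K) : Prop :=
  ∀ j, Function.Bijective
    (fun a : (S.pt j).carrier => (τ j).comp (LinearMap.mulRight K a))

/-- The total trace `Γ → K`, `y ↦ Σ_j τ_j (y_j)`; on the degree-`i` component of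
`Q^h(R)` the trace map `σ` is `q ↦ (Ttot τ q)·x₀^i`. -/
def Ttot (τ : ∀ j, (S.pt j).carrier →ₗ[K] K) : S.Gamma →ₗ[K] K :=
  ∑ j : Fin S.s, (τ j).comp (LinearMap.proj j)

/-- The degree-`k` component `(𝔠^σ_𝕏)_k ⊆ Q^h(R)_k ≅ Γ` of the Dedekind complementary
module: `g ∈ (𝔠^σ_𝕏)_k` iff `σ(g · R) ⊆ K[x₀]`, i.e. `Ttot τ (g·x) = 0` whenever
`x ∈ R_i` with `k + i < 0`. -/
def Cmod (τ : ∀ j, (S.pt j).carrier →ₗ[K] K) (k : ℤ) : Submodule K S.Gamma :=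
  ⨅ (i : ℕ) (_ : k + (i : ℤ) < 0) (x : S.Gamma) (_ : x ∈ S.V i),
    LinearMap.ker ((S.Ttot τ).comp (LinearMap.mulRight K x))

/-- The degree-`i` component `(δ^σ_𝕏)_i ⊆ Q^h(R)_i ≅ Γ` of the Dedekind different
`δ^σ_𝕏 = {f ∈ Q^h(R) | f · 𝔠^σ_𝕏 ⊆ R}`. -/
def delta (τ : ∀ j, (S.pt j).carrier →ₗ[K] K) (i : ℤ) : Submodule K S.Gamma :=
  ⨅ (k : ℤ) (g : S.Gamma) (_ : g ∈ S.Cmod τ k),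
    Submodule.comap (LinearMap.mulRight K g) (S.Vz (i + k))

/-- The Hilbert function of the Dedekind different. -/
def HFdelta (τ : ∀ j, (S.pt j).carrier →ₗ[K] K) (i : ℤ) : ℕ :=
  Module.finrank K (S.delta τ i)

/-- `𝕏` has minimal Dedekind different: `δ^σ_𝕏 = ⊕_{i ≥ 2 r_𝕏} R_i`
(recall `R_i ≅ Γ` for `i ≥ r_𝕏`). -/
def MinimalDedekind (τ : ∀ j, (S.pt j).carrier →ₗ[K] K) : Prop :=
  ∀ i : ℤ, S.delta τ i = if 2 * (S.rX : ℤ) ≤ i then ⊤ else ⊥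

/-- The degree-`i` component (`i ≥ 0`) of the conductor
`𝔉_{R̃/R} = {f ∈ R̃ | f·R̃ ⊆ R}` of `R` in `R̃ = ∏_j 𝒪_{𝕏,p_j}[T_j]`
(whose degree-`i` component is all of `Γ` for every `i ≥ 0`). -/
def cond (i : ℕ) : Submodule K S.Gamma :=
  ⨅ y : S.Gamma, Submodule.comap (LinearMap.mulRight K y) (S.V i)

/-- The conductor on `ℤ` (zero in negative degrees, where `R̃` vanishes). -/
def condZ (i : ℤ) : Submodule K S.Gamma := if 0 ≤ i then S.cond i.toNat else ⊥

/-- The degree-`i` component of the trace `tr(𝔠^σ_𝕏) = δ^σ_𝕏 · 𝔠^σ_𝕏` of the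
Dedekind complementary module. -/
def trC (τ : ∀ j, (S.pt j).carrier →ₗ[K] K) (i : ℤ) : Submodule K S.Gamma :=
  ⨆ (a : ℤ) (b : ℤ) (_ : a + b = i), S.delta τ a * S.Cmod τ b

/-- `𝕏` is nearly Gorenstein: `𝔪 ⊆ tr(𝔠^σ_𝕏)`. -/
def NearlyGorenstein (τ : ∀ j, (S.pt j).carrier →ₗ[K] K) : Prop :=
  ∀ i : ℤ, 1 ≤ i → S.Vz i ≤ S.trC τ i

/-- `𝕏` is almost Gorenstein: there is an exact sequence of graded `R`-modules
`0 → R → 𝔠^σ_𝕏(-r_𝕏) → C → 0` with `𝔪·C = 0`.  A degree-zero graded injection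
`R → 𝔠^σ_𝕏(-r_𝕏)` is multiplication by an element `g ∈ (𝔠^σ_𝕏)_{-r_𝕏}` with
`Ann_R(g) = 0`, and `𝔪·C = 0` means `𝔪 · 𝔠^σ_𝕏(-r_𝕏) ⊆ g·R`. -/
def AlmostGorenstein (τ : ∀ j, (S.pt j).carrier →ₗ[K] K) : Prop :=
  ∃ g ∈ S.Cmod τ (-(S.rX : ℤ)),
    (∀ i : ℕ, ∀ x ∈ S.V i, x * g = 0 → x = 0) ∧
    (∀ a : ℕ, 1 ≤ a → ∀ x ∈ S.V a, ∀ k : ℤ, ∀ h ∈ S.Cmod τ k,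
      x * h ∈ Submodule.map (LinearMap.mulRight K g) (S.Vz ((a : ℤ) + k + (S.rX : ℤ))))

/-- `𝕏` is arithmetically Gorenstein, i.e. `R` is a Gorenstein ring; equivalently the
canonical module is free of rank one: `𝔠^σ_𝕏 = g·R` for some `g ∈ (𝔠^σ_𝕏)_{-r_𝕏}`. -/
def ArithGorenstein (τ : ∀ j, (S.pt j).carrier →ₗ[K] K) : Prop :=
  ∃ g ∈ S.Cmod τ (-(S.rX : ℤ)),
    ∀ k : ℤ, S.Cmod τ k = Submodule.map (LinearMap.mulRight K g) (S.Vz (k + (S.rX : ℤ)))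

/-- `𝕏` is level: the socle of `R̄ = R/⟨x₀⟩` equals `R̄_{r_𝕏}`, i.e. no nonzero
homogeneous element of `R̄` of degree `< r_𝕏` is annihilated by `𝔪̄` (recall
`R̄_i ≅ V i / V (i-1)` and `x₀`-multiplication preserves germs). -/
def Level : Prop :=
  ∀ i : ℕ, i < S.rX → ∀ x ∈ S.V i,
    (∀ a : ℕ, 1 ≤ a → ∀ y ∈ S.V a, x * y ∈ S.Vz ((i : ℤ) + (a : ℤ) - 1)) →
      x ∈ S.Vz ((i : ℤ) - 1)

/-- The subspace `{x ∈ Γ | x_k = 0 for k ≠ j}` of `Γ`: the degreewise model for the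
ideal of the subscheme `𝕐_j ⊆ 𝕏` with `I_{𝕐_j} = ∩_{k ≠ j} I_k`. -/
def Wj (j : Fin S.s) : Submodule K S.Gamma :=
  ⨅ (k : Fin S.s) (_ : k ≠ j),
    LinearMap.ker (LinearMap.proj k : S.Gamma →ₗ[K] (S.pt k).carrier)

/-- `(I_{𝕐_j/𝕏})_i` for the subscheme `𝕐_j` complementary to `p_j`. -/
def IW (j : Fin S.s) (i : ℕ) : Submodule K S.Gamma := S.V i ⊓ S.Wj j

/-- The Hilbert function of the subscheme `𝕐_j` complementary to `p_j`. -/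
def HFW (j : Fin S.s) (i : ℕ) : ℕ := S.HF i - Module.finrank K (S.IW j i)

/-- `α_{𝕐_j/𝕏}` for the subscheme `𝕐_j` complementary to `p_j`. -/
def alphaW (j : Fin S.s) : ℕ := sInf {i : ℕ | S.IW j i ≠ ⊥}

/-- The subspace `{x ∈ Γ | x_k = 0 for k ∉ {j₁, j₂}}` of `Γ`: the degreewise model for
the ideal in `R` of the subscheme of the reduced scheme `𝕏` complementary to `{p_{j₁}, p_{j₂}}`. -/
def Wpair (j1 j2 : Fin S.s) : Submodule K S.Gamma :=
  ⨅ (k : Fin S.s) (_ : k ≠ j1) (_ : k ≠ j2),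
    LinearMap.ker (LinearMap.proj k : S.Gamma →ₗ[K] (S.pt k).carrier)

/-- The homogeneous vanishing ideal `I_𝕏 ⊆ P`. -/
def IX : Ideal (MvPolynomial (Fin (n + 1)) K) :=
  Ideal.span {F | (∃ i : ℕ, F ∈ MvPolynomial.homogeneousSubmodule (Fin (n + 1)) K i) ∧
    S.germ F = 0}

/-- The `n×n`-minor (Jacobian determinant with respect to `X_1, …, X_n`) of an
`n`-tuple of polynomials. -/
def jacMinor (Fs : Fin n → MvPolynomial (Fin (n + 1)) K) : MvPolynomial (Fin (n + 1)) K :=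
  Matrix.det (Matrix.of fun a b : Fin n => MvPolynomial.pderiv (Fin.succ b) (Fs a))

/-- The preimage in `P` of the Kähler different `ϑ_𝕏 ⊆ R`: the ideal generated by
`I_𝕏` together with all `n×n` minors of the Jacobian matrix of elements of `I_𝕏`. -/
def KaehlerIdeal : Ideal (MvPolynomial (Fin (n + 1)) K) :=
  S.IX ⊔ Ideal.span {m | ∃ Fs : Fin n → MvPolynomial (Fin (n + 1)) K,
    (∀ a, Fs a ∈ S.IX) ∧ m = jacMinor Fs}

/-- The degree-`i` component of the Kähler different `ϑ_𝕏 ⊆ R`, viewed inside `Γ`. -/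
def thetaPiece (i : ℕ) : Submodule K S.Gamma :=
  Submodule.map S.germ.toLinearMap
    (Submodule.restrictScalars K S.KaehlerIdeal ⊓
      MvPolynomial.homogeneousSubmodule (Fin (n + 1)) K i)

end ZeroDimScheme

end

namespace ZeroDimScheme

variable {K : Type} [Field K] {n : ℕ}

lemma aux_V_mono (S : ZeroDimScheme K n) : Monotone S.V := by
  apply monotone_nat_of_le_succ
  rintro i x ⟨F, hF, rfl⟩
  refine ⟨F * MvPolynomial.X 0, ?_, ?_⟩
  · have h1 : F.IsHomogeneous i := hF
    exact h1.mul (MvPolynomial.isHomogeneous_X K 0)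
  · simp [S.germ_X0]

lemma aux_rep (S : ZeroDimScheme K n)
    (hrat : ∀ j, Module.finrank K (S.pt j).carrier = 1)
    (τ : ∀ j, (S.pt j).carrier →ₗ[K] K)
    (hτ1 : ∀ j, τ j 1 = 1) (j : Fin S.s) (x : (S.pt j).carrier) :
    x = τ j x • (1 : (S.pt j).carrier) := by
  obtain ⟨c, rfl⟩ := (finrank_eq_one_iff_of_nonzero' (1 : (S.pt j).carrier) one_ne_zero).1
    (hrat j) x
  simp [hτ1]

lemma aux_mu (S : ZeroDimScheme K n) (j : Fin S.s) (c : K) (hc : c ≠ 0) :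
    S.mu j (c • (1 : (S.pt j).carrier)) = S.mu j 1 := by
  unfold mu
  congr 1
  ext i
  simp only [Set.mem_setOf_eq]
  have : (Pi.single j (c • (1 : (S.pt j).carrier)) : S.Gamma)
      = c • (Pi.single j (1 : (S.pt j).carrier) : S.Gamma) := Pi.single_smul j c 1
  rw [this, Submodule.smul_mem_iff _ hc]

lemma aux_degP (S : ZeroDimScheme K n)
    (hrat : ∀ j, Module.finrank K (S.pt j).carrier = 1)
    (τ : ∀ j, (S.pt j).carrier →ₗ[K] K)
    (hτ1 : ∀ j, τ j 1 = 1) (j : Fin S.s) : S.degP j = S.mu j 1 := by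
  have hmu : ∀ x : (S.pt j).carrier, x ≠ 0 → S.mu j x = S.mu j 1 := by
    intro x hx
    have hrep := aux_rep S hrat τ hτ1 j x
    rw [hrep]
    apply aux_mu
    intro h
    rw [h, zero_smul] at hrep
    exact hx hrep
  have hmuY : ∀ x : (S.pt j).carrier, x ≠ 0 → S.muY j x = S.mu j 1 := by
    intro x hx
    have : {m : ℕ | ∃ a : (S.pt j).carrier, a * x ≠ 0 ∧ m = S.mu j (a * x)}
        = {S.mu j 1} := by
      ext m
      simp only [Set.mem_setOf_eq, Set.mem_singleton_iff]
      constructor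
      · rintro ⟨a, ha, rfl⟩
        exact hmu _ ha
      · rintro rfl
        exact ⟨1, by simpa using hx, by rw [one_mul, hmu x hx]⟩
    rw [muY, this, csSup_singleton]
  have : {m : ℕ | ∃ sj : (S.pt j).carrier, S.IsSocle j sj ∧ sj ≠ 0 ∧ m = S.muY j sj}
      = {S.mu j 1} := by
    ext m
    simp only [Set.mem_setOf_eq, Set.mem_singleton_iff]
    constructor
    · rintro ⟨a, _, ha, rfl⟩
      exact hmuY _ ha
    · rintro rfl
      refine ⟨1, ?_, one_ne_zero, (hmuY 1 one_ne_zero).symm⟩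
      intro b hb
      rw [one_mul]
      have hrep := aux_rep S hrat τ hτ1 j b
      by_contra hb0
      have hc : τ j b ≠ 0 := by
        intro h
        rw [h, zero_smul] at hrep
        exact hb0 hrep
      apply (IsLocalRing.mem_maximalIdeal b).1 hb
      rw [hrep, ← Algebra.algebraMap_eq_smul_one]
      exact (IsUnit.mk0 _ hc).map (algebraMap K _)
  rw [degP, this, csInf_singleton]

lemma aux_CB (S : ZeroDimScheme K n)
    (hrat : ∀ j, Module.finrank K (S.pt j).carrier = 1)
    (τ : ∀ j, (S.pt j).carrier →ₗ[K] K)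
    (hτ1 : ∀ j, τ j 1 = 1) (d : ℕ) (j : Fin S.s) :
    d + 1 ≤ S.degP j ↔ (Pi.single j (1 : (S.pt j).carrier) : S.Gamma) ∉ S.V d := by
  rw [aux_degP S hrat τ hτ1 j, mu]
  constructor
  · intro h hm
    have := Nat.sInf_le (s := {i : ℕ | (Pi.single j (1 : (S.pt j).carrier) : S.Gamma) ∈ S.V i}) hm
    omega
  · intro h
    obtain ⟨N, hN⟩ := S.eventually_surj
    apply le_csInf
    · refine ⟨N, ?_⟩
      change _ ∈ S.V N
      rw [V, hN N le_rfl]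
      trivial
    · intro i hi
      by_contra hlt
      exact h (aux_V_mono S (by omega : i ≤ d) hi)

lemma aux_mem_Cmod (S : ZeroDimScheme K n) (τ : ∀ j, (S.pt j).carrier →ₗ[K] K) (k : ℤ)
    (g : S.Gamma) : g ∈ S.Cmod τ k ↔
      ∀ i : ℕ, k + (i : ℤ) < 0 → ∀ x ∈ S.V i, ∑ j, τ j (g j * x j) = 0 := by
  simp [Cmod, Submodule.mem_iInf, Ttot, LinearMap.sum_apply]

lemma aux_mem_delta (S : ZeroDimScheme K n) (τ : ∀ j, (S.pt j).carrier →ₗ[K] K) (i : ℤ)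
    (f : S.Gamma) : f ∈ S.delta τ i ↔
      ∀ (k : ℤ), ∀ g ∈ S.Cmod τ k, f * g ∈ S.Vz (i + k) := by
  simp [delta, Submodule.mem_iInf]

lemma aux_single_mul (S : ZeroDimScheme K n)
    (hrat : ∀ j, Module.finrank K (S.pt j).carrier = 1)
    (τ : ∀ j, (S.pt j).carrier →ₗ[K] K)
    (hτ1 : ∀ j, τ j 1 = 1) (j : Fin S.s) (g : S.Gamma) :
    (Pi.single j (1 : (S.pt j).carrier) : S.Gamma) * g
      = τ j (g j) • (Pi.single j (1 : (S.pt j).carrier) : S.Gamma) := by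
  ext k
  rcases eq_or_ne k j with rfl | hk
  · simpa using aux_rep S hrat τ hτ1 k (g k)
  · simp [Pi.single_eq_of_ne hk]

lemma aux_delta (S : ZeroDimScheme K n)
    (hrat : ∀ j, Module.finrank K (S.pt j).carrier = 1)
    (τ : ∀ j, (S.pt j).carrier →ₗ[K] K)
    (hτ1 : ∀ j, τ j 1 = 1) (hr : 2 ≤ S.rX) (j : Fin S.s) :
    (Pi.single j (1 : (S.pt j).carrier) : S.Gamma) ∈ S.delta τ (2 * (S.rX : ℤ) - 2) ↔
      (Pi.single j (1 : (S.pt j).carrier) : S.Gamma) ∈ S.V (S.rX - 1) := by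
  rw [aux_mem_delta]
  constructor
  · intro h
    by_contra hn
    obtain ⟨φ, hφ, hV⟩ := Submodule.exists_le_ker_of_notMem hn
    let g : S.Gamma := fun k => φ (Pi.single k 1) • 1
    have hφg : ∀ x : S.Gamma, φ x = ∑ k, τ k (g k * x k) := by
      intro x
      have hx : x = ∑ k, τ k (x k) • (Pi.single k (1 : (S.pt k).carrier) : S.Gamma) := by
        ext l
        rw [Finset.sum_apply, Finset.sum_eq_single l]
        · simpa using aux_rep S hrat τ hτ1 l (x l)
        · intro b _ hb
          simp [Pi.single_eq_of_ne hb.symm]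
        · simp
      conv_lhs => rw [hx]
      rw [map_sum]
      refine Finset.sum_congr rfl fun k _ => ?_
      simp [g, mul_comm]
    have hg : g ∈ S.Cmod τ (-(S.rX : ℤ)) := by
      rw [aux_mem_Cmod]
      intro i hi x hx
      rw [← hφg]
      exact hV (aux_V_mono S (by omega : i ≤ S.rX - 1) hx)
    have h2 := h _ g hg
    rw [aux_single_mul S hrat τ hτ1] at h2
    have hgj : τ j (g j) = φ (Pi.single j 1) := by simp [g, hτ1]
    rw [hgj, Submodule.smul_mem_iff _ hφ, Vz, if_pos (by omega)] at h2
    exact hn (aux_V_mono S (by omega) h2)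
  · intro h k g hg
    rw [aux_single_mul S hrat τ hτ1]
    by_cases hk : k + ((S.rX - 1 : ℕ) : ℤ) < 0
    · have := (aux_mem_Cmod S τ k g).1 hg _ hk _ h
      rw [Finset.sum_eq_single j] at this
      · rw [Pi.single_eq_same, mul_one] at this
        rw [this, zero_smul]
        exact Submodule.zero_mem _
      · intro b _ hb
        simp [Pi.single_eq_of_ne hb]
      · simp
    · apply Submodule.smul_mem
      rw [Vz, if_pos (by omega)]
      exact aux_V_mono S (by omega) h

end ZeroDimScheme

/-- Corollary 5.10 / `corSec4.10`.  Let `𝕏 = {p_1, …, p_s} ⊆ ℙⁿ_K`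
be a set of distinct `K`-rational points with `r_𝕏 ≥ 2`, none on `Z(X₀)`, and for
each `j` let `f_j ∈ R_{r_𝕏}` be the separator of `𝕏∖{p_j}` in `𝕏` with
`f_j(p_j) = 1` and `f_j(p_k) = 0` for `k ≠ j` (so `ĩ(f_j) = Pi.single j 1` in `Γ`).
Then `𝕏` is a Cayley–Bacharach scheme iff `x₀^{r_𝕏-2}·f_j ∉ (δ_𝕏)_{2r_𝕏-2}` for
all `j`; under the degreewise identification `x₀^{r_𝕏-2}·f_j` is the element
`Pi.single j 1` of the degree-`2r_𝕏-2` part of `Q^h(R)`. -/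
theorem dedekind_CB_stmt13 (K : Type) [Field K] (n : ℕ) (S : ZeroDimScheme K n)
    (hrat : ∀ j, Module.finrank K (S.pt j).carrier = 1)
    (τ : ∀ j, (S.pt j).carrier →ₗ[K] K) (hτ : S.IsTraceFamily τ)
    (hτ1 : ∀ j, τ j 1 = 1) (hr : 2 ≤ S.rX) :
    S.CayleyBacharach ↔
      ∀ j : Fin S.s,
        (Pi.single j (1 : (S.pt j).carrier) : S.Gamma) ∉
          S.delta τ (2 * (S.rX : ℤ) - 2) := by
  refine forall_congr' fun j => ?_
  rw [ZeroDimScheme.aux_CB S hrat τ hτ1, ZeroDimScheme.aux_delta S hrat τ hτ1 hr]
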